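/- Let H = ℓ²(ℤ, ℂ) with standard orthonormal basis (e_k)_{k∈ℤ}, P the projection with (P f)(k) = f(k) for k > 0 and 0 otherwise, and S^m the bilateral shift S^m e_k = e_{k+m}. For all m, n ∈ ℤ, setting Ω(S^m, S^n) := (S^m∘P)∘(S^n∘P) − (S^n∘P)∘(S^m∘P), the family k ↦ ⟨Ω(S^m, S^n) e_k, e_k⟩ has sum equal to (if m + n = 0 then (−m : ℂ) else 0), i.e. HasSum (fun k => ⟨Ω(S^m,S^n) e_k, e_k⟩) (if m + n = 0 then (−m : ℂ) else 0). -/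

import Mathlib

/-! In the basis `e k`, both products in the commutator send `e k` either to `0` or to
`e (k + m + n)`, so every diagonal entry vanishes when `m + n ≠ 0`. When `n = -m`, the diagonal
entry at `k > 0` is `1_{k > m} - 1_{k > -m}` (and it is `0` at `k ≤ 0`): the two half-lines cancel
except on the interval `(0, |m|]`, where the entry is `-1` if `m > 0` and `1` if `m < 0`.
Hence the sum is finite and equals `-m`. -/

open scoped InnerProductSpace

/-- The Hilbert space `H = ℓ²(ℤ, ℂ)`. -/
noncomputable abbrev H : Type := lp (fun _ : ℤ => ℂ) 2

/-- The standard orthonormal basis vector `e k` of `ℓ²(ℤ, ℂ)`. -/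
noncomputable def e (k : ℤ) : H := lp.single 2 k (1 : ℂ)

/-- A bounded operator has finite rank iff its range is a finite-dimensional subspace. -/
def FiniteRank (T : H →L[ℂ] H) : Prop :=
  FiniteDimensional ℂ (LinearMap.range (T : H →ₗ[ℂ] H))

lemma inner_e_e (j k : ℤ) : ⟪e j, e k⟫_ℂ = if j = k then 1 else 0 := by
  unfold e
  rw [lp.inner_single_left]
  by_cases h : j = k
  · subst h; simp
  · simp [h, lp.single_apply]

lemma proj_e (P : H →L[ℂ] H) (hP : ∀ (f : H) (k : ℤ), P f k = if 0 < k then f k else 0)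
    (k : ℤ) : P (e k) = if 0 < k then e k else 0 := by
  apply lp.ext
  funext j
  rw [hP]
  by_cases hjk : j = k
  · subst hjk; split_ifs <;> simp
  · split_ifs <;> simp [e, lp.single_apply, hjk]

/-- The action of a product of two compressed shifts on a basis vector. -/
lemma shift_proj_comp_e (P A B : H →L[ℂ] H) (a b : ℤ)
    (hP : ∀ (f : H) (k : ℤ), P f k = if 0 < k then f k else 0)
    (hA : ∀ k : ℤ, A (e k) = e (k + a)) (hB : ∀ k : ℤ, B (e k) = e (k + b)) (k : ℤ) :
    ((A ∘L P) ∘L (B ∘L P)) (e k) = if 0 < k ∧ 0 < k + b then e (k + b + a) else 0 := by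
  simp only [ContinuousLinearMap.comp_apply, proj_e P hP k]
  by_cases h : 0 < k
  · simp only [h, if_true, true_and, hB, proj_e P hP (k + b)]
    split_ifs <;> simp [hA]
  · simp [h]

/-- A family on `ℤ` that is constant on `(0, N]` and zero elsewhere. -/
lemma hasSum_const_Ioc (N : ℤ) (hN : 0 ≤ N) (c : ℂ) (f : ℤ → ℂ)
    (hf : ∀ k, f k = if 0 < k ∧ k ≤ N then c else 0) : HasSum f (N * c) := by
  have h : HasSum f (∑ k ∈ Finset.Ioc 0 N, f k) := by
    apply hasSum_sum_of_ne_finset_zero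
    intro k hk
    rw [Finset.mem_Ioc] at hk
    rw [hf, if_neg hk]
  have hs : ∑ k ∈ Finset.Ioc 0 N, f k = N * c := by
    rw [Finset.sum_congr rfl (g := fun _ => c)
      (fun k hk => by rw [hf, if_pos (Finset.mem_Ioc.mp hk)])]
    have hc : ((N.toNat : ℕ) : ℂ) = (N : ℂ) := by exact_mod_cast Int.toNat_of_nonneg hN
    simp [hc]
  rwa [hs] at h

/-- The trace of the curvature `Ω(S^m, S^n) = [S^m∘P, S^n∘P]`, computed as the
sum of diagonal entries in the standard orthonormal basis, equals `−m` when
`m + n = 0` and `0` otherwise. -/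
theorem trace_omega_shifts (m n : ℤ) (P Sm Sn : H →L[ℂ] H)
    (hP : ∀ (f : H) (k : ℤ), P f k = if 0 < k then f k else 0)
    (hSm : ∀ k : ℤ, Sm (e k) = e (k + m))
    (hSn : ∀ k : ℤ, Sn (e k) = e (k + n)) :
    HasSum
      (fun k : ℤ =>
        ⟪((Sm ∘L P) ∘L (Sn ∘L P) - (Sn ∘L P) ∘L (Sm ∘L P)) (e k), e k⟫_ℂ)
      (if m + n = 0 then (-m : ℂ) else 0) := by
  have key : ∀ k : ℤ,
      ⟪((Sm ∘L P) ∘L (Sn ∘L P) - (Sn ∘L P) ∘L (Sm ∘L P)) (e k), e k⟫_ℂ =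
        if m + n = 0 then
          (if 0 < k ∧ 0 < k + n then (1 : ℂ) else 0) - (if 0 < k ∧ 0 < k + m then 1 else 0)
        else 0 := by
    intro k
    rw [sub_apply, shift_proj_comp_e P Sm Sn m n hP hSm hSn,
      shift_proj_comp_e P Sn Sm n m hP hSn hSm, inner_sub_left]
    have h1 : k + n + m = k ↔ m + n = 0 := by omega
    have h2 : k + m + n = k ↔ m + n = 0 := by omega
    split_ifs <;> simp_all [inner_e_e, -inner_self_eq_norm_sq_to_K]
  simp only [key]
  by_cases hmn : m + n = 0
  · simp only [hmn, if_true]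
    obtain rfl : n = -m := by omega
    rcases le_total 0 m with hm | hm
    · have h := hasSum_const_Ioc m hm (-1)
        (fun k => (if 0 < k ∧ 0 < k + -m then (1 : ℂ) else 0) -
          (if 0 < k ∧ 0 < k + m then 1 else 0))
        (fun k => by split_ifs <;> first | omega | simp)
      simpa using h
    · have h := hasSum_const_Ioc (-m) (by omega) 1
        (fun k => (if 0 < k ∧ 0 < k + -m then (1 : ℂ) else 0) -
          (if 0 < k ∧ 0 < k + m then 1 else 0))
        (fun k => by split_ifs <;> first | omega | simp)
      simpa using h
  · simp only [hmn, if_false]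
    exact hasSum_zero
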